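/- Let A = (a_1, …, a_k) be a nonempty multiset of integers with each a_i ≥ 2 such that c(A) = Σ_i (a_i − 1) is odd. Then for all n ≥ c(A)·Φ_{2k}(2k) + 1, where Φ_{2k} denotes the (2k)-th cyclotomic polynomial, the minimum cardinality of a subset T of the extended conjugacy class C(A) in S_n such that T generates S_n is exactly ⌈(n−1)/c(A)⌉. -/

import Mathlib

/-!
Lower bound: a permutation `g` links the points of each of its cycles by a tree, hence with
`#g.support - card g.cycleType` edges in total. The edges of all the generators form a connected
graph, so there are at least `n - 1` of them, and each generator in `C(A)` accounts for `c(A)`.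

Upper bound: take `m = max k 2` elements of `C(A)` whose supports meet pairwise in a single point
`p`, and let the other generators fix `p`. Any block containing `p` and a second point is mapped to
itself by every generator, so a transitive group of this form is primitive. The commutator of two of
the `m` elements is a 3-cycle, so by Jordan's theorem the group contains the alternating group, and
oddness of `c(A)` makes it the whole symmetric group. Each of the `m` elements attaches `c(A)`
points to the orbit of `p`, provided that the other points are attached. Every further generator has
`k` of its points, one in each cycle, among the images of `p` under the first `m` elements, so that
it attaches `c(A)` arbitrary points. Hence `m + l` generators suffice as soon as
`n - 1 ≤ c(A) * (m + l)`.
-/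

open Equiv Equiv.Perm MulAction
open scoped Pointwise Finset commutatorElement

section Finset

variable {α : Type*}

theorem exists_pairwise_disjoint_subsets_card_eq {s : Finset α} {m d : ℕ} (h : m * d ≤ #s) :
    ∃ U : Fin m → Finset α, (∀ i, U i ⊆ s) ∧ (∀ i, #(U i) = d) ∧
      Pairwise fun i j => Disjoint (U i) (U j) := by
  obtain ⟨e⟩ : Nonempty (Fin m × Fin d ↪ s) :=
    Function.Embedding.nonempty_of_card_le (by simpa using h)
  refine ⟨fun i => Finset.univ.map
    ((Function.Embedding.sectR i (Fin d)).trans (e.trans (.subtype _))), fun i x hx => ?_,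
    fun i => by simp, fun i j hij => Finset.disjoint_left.2 fun x hxi hxj => ?_⟩
  · obtain ⟨t, -, rfl⟩ := Finset.mem_map.1 hx
    exact (e (i, t)).2
  · obtain ⟨t, -, rfl⟩ := Finset.mem_map.1 hxi
    obtain ⟨u, -, hu⟩ := Finset.mem_map.1 hxj
    exact hij (congrArg Prod.fst (e.injective (Subtype.ext hu))).symm

theorem exists_cover_subsets_card_le {s : Finset α} {l c : ℕ} (h : #s ≤ l * c) :
    ∃ P : Fin l → Finset α, (∀ j, P j ⊆ s) ∧ (∀ j, #(P j) ≤ c) ∧ ∀ x ∈ s, ∃ j, x ∈ P j := by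
  classical
  obtain rfl | hs := s.eq_empty_or_nonempty
  · exact ⟨fun _ => ∅, by simp⟩
  have : Nonempty s := hs.to_subtype
  obtain ⟨e⟩ : Nonempty (s ↪ Fin l × Fin c) :=
    Function.Embedding.nonempty_of_card_le (by simpa using h)
  refine ⟨fun j => Finset.univ.image fun t : Fin c => ((Function.invFun e (j, t) : s) : α),
    fun j => Finset.image_subset_iff.2 fun t _ => (Function.invFun e (j, t) : s).2,
    fun j => Finset.card_image_le.trans (by simp), fun x hx => ⟨(e ⟨x, hx⟩).1, ?_⟩⟩
  refine Finset.mem_image.2 ⟨(e ⟨x, hx⟩).2, Finset.mem_univ _, ?_⟩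
  rw [Prod.mk.eta, Function.leftInverse_invFun e.injective]

end Finset

section LowerBound

theorem reachable_apply_of_mem_closure {V : Type*} {G : SimpleGraph V} {S : Set (Perm V)}
    (hS : ∀ g ∈ S, ∀ x, G.Reachable x (g x)) {g : Perm V} (hg : g ∈ Subgroup.closure S) (x : V) :
    G.Reachable x (g x) := by
  induction hg using Subgroup.closure_induction generalizing x with
  | mem g hg => exact hS g hg x
  | one => exact .refl x
  | mul g h _ _ ihg ihh => exact (ihh x).trans (ihg (h x))
  | inv g _ ih => simpa using (ih (g⁻¹ x)).symm

variable {α : Type*} [Fintype α] [DecidableEq α]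

theorem exists_edges_reachable_apply_of_isCycle {g : Perm α} (hg : g.IsCycle) :
    ∃ E : Finset (Sym2 α), #E + 1 ≤ #g.support ∧
      ∀ x, (SimpleGraph.fromEdgeSet (E : Set (Sym2 α))).Reachable x (g x) := by
  obtain ⟨r, hr⟩ := hg.nonempty_support
  let E := (g.support.erase r).image fun x => s(r, x)
  have hE : #E ≤ #(g.support.erase r) := Finset.card_image_le
  have hreach : ∀ x ∈ g.support, (SimpleGraph.fromEdgeSet (E : Set (Sym2 α))).Reachable r x := by
    intro x hx
    obtain rfl | hxr := eq_or_ne x r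
    · exact .refl x
    · refine SimpleGraph.Adj.reachable ((SimpleGraph.fromEdgeSet_adj _).2 ⟨?_, hxr.symm⟩)
      exact Finset.mem_coe.2 (Finset.mem_image_of_mem _ (Finset.mem_erase.2 ⟨hxr, hx⟩))
  refine ⟨E, ?_, fun x => ?_⟩
  · rw [← Finset.card_erase_add_one hr]
    exact Nat.succ_le_succ hE
  · by_cases hx : x ∈ g.support
    · exact (hreach x hx).symm.trans (hreach (g x) (apply_mem_support.2 hx))
    · rw [notMem_support.1 hx]

theorem exists_edges_reachable_apply (g : Perm α) :
    ∃ E : Finset (Sym2 α), #E + g.cycleType.card ≤ #g.support ∧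
      ∀ x, (SimpleGraph.fromEdgeSet (E : Set (Sym2 α))).Reachable x (g x) := by
  induction g using cycle_induction_on with
  | base_one => exact ⟨∅, by simp⟩
  | base_cycles g hg => simpa [hg.cycleType] using exists_edges_reachable_apply_of_isCycle hg
  | induction_disjoint g h hgh _ ihg ihh =>
    obtain ⟨E, hE, hEreach⟩ := ihg
    obtain ⟨F, hF, hFreach⟩ := ihh
    refine ⟨E ∪ F, ?_, fun x => ?_⟩
    · have := Finset.card_union_le E F
      rw [hgh.cycleType_mul, hgh.card_support_mul, Multiset.card_add]
      omega
    · rw [Finset.coe_union]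
      exact ((hFreach x).mono (SimpleGraph.fromEdgeSet_mono Set.subset_union_right)).trans
        ((hEreach (h x)).mono (SimpleGraph.fromEdgeSet_mono Set.subset_union_left))

theorem card_le_sum_card_support_sub_card_cycleType_add_one [Nonempty α] (T : Finset (Perm α))
    [IsPretransitive (Subgroup.closure (T : Set (Perm α))) α] :
    Fintype.card α ≤ ∑ g ∈ T, (#g.support - g.cycleType.card) + 1 := by
  choose E hEcard hEreach using exists_edges_reachable_apply (α := α)
  let G := SimpleGraph.fromEdgeSet (T.biUnion E : Set (Sym2 α))
  have hgen : ∀ g ∈ (T : Set (Perm α)), ∀ x, G.Reachable x (g x) := fun g hg x =>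
    (hEreach g x).mono (SimpleGraph.fromEdgeSet_mono
      (Finset.coe_subset.2 (Finset.subset_biUnion_of_mem E hg)))
  have hconn : G.Connected := .mk fun x y => by
    obtain ⟨h, rfl⟩ := exists_smul_eq (Subgroup.closure (T : Set (Perm α))) x y
    exact reachable_apply_of_mem_closure hgen h.2 x
  have hedges : Nat.card G.edgeSet ≤ #(T.biUnion E) := by
    rw [Nat.card_coe_set_eq, ← Set.ncard_coe_finset, SimpleGraph.edgeSet_fromEdgeSet]
    exact Set.ncard_le_ncard Set.sdiff_subset (Finset.finite_toSet _)
  calc Fintype.card α = Nat.card α := Nat.card_eq_fintype_card.symm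
    _ ≤ Nat.card G.edgeSet + 1 := hconn.card_vert_le_card_edgeSet_add_one
    _ ≤ ∑ g ∈ T, #(E g) + 1 := by
      gcongr
      exact hedges.trans Finset.card_biUnion_le
    _ ≤ ∑ g ∈ T, (#g.support - g.cycleType.card) + 1 := by
      gcongr with g
      exact Nat.le_sub_of_add_le (hEcard g)

theorem card_sub_one_ceilDiv_le_card_of_closure_eq_top {A : Multiset ℕ}
    (hA : 0 < A.sum - A.card) {T : Finset (Perm α)} (hTA : ∀ g ∈ T, g.cycleType = A)
    (hT : Subgroup.closure (T : Set (Perm α)) = ⊤) :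
    (Fintype.card α - 1) ⌈/⌉ (A.sum - A.card) ≤ #T := by
  rw [ceilDiv_le_iff_le_mul hA, Nat.sub_le_iff_le_add]
  cases isEmpty_or_nonempty α
  · simp
  have : IsPretransitive (Subgroup.closure (T : Set (Perm α))) α := ⟨fun x y =>
    ⟨⟨swap x y, hT ▸ Subgroup.mem_top _⟩, swap_apply_left x y⟩⟩
  calc Fintype.card α ≤ ∑ g ∈ T, (#g.support - g.cycleType.card) + 1 :=
        card_le_sum_card_support_sub_card_cycleType_add_one T
    _ = ∑ _g ∈ T, (A.sum - A.card) + 1 := by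
      congr 1
      exact Finset.sum_congr rfl fun g hg => by rw [← sum_cycleType, hTA g hg]
    _ = (A.sum - A.card) * #T + 1 := by rw [Finset.sum_const, smul_eq_mul, mul_comm]

end LowerBound

section Star

variable {α ι : Type*} {p : α} {g : ι → Perm α} {F : Set (Perm α)}

/-- A family of permutations is a star with centre `p` if any two of its members move exactly one
common point, namely `p`. Its members, with permutations fixing `p` added, generate a primitive
group as soon as they generate a transitive one. -/
def IsStar (p : α) (g : ι → Perm α) : Prop :=
  Pairwise fun i j => ∀ x, g i x ≠ x ∧ g j x ≠ x ↔ x = p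

namespace IsStar

theorem apply_center_ne [Nontrivial ι] (hg : IsStar p g) (i : ι) : g i p ≠ p := by
  obtain ⟨j, hj⟩ := exists_ne i
  exact ((hg hj.symm p).2 rfl).1

theorem apply_eq_self (hg : IsStar p g) {i j : ι} (hij : i ≠ j) {x : α} (hx : x ≠ p)
    (hi : g i x ≠ x) : g j x = x :=
  by_contra fun hj => hx ((hg hij x).1 ⟨hi, hj⟩)

theorem apply_apply_center [Nontrivial ι] (hg : IsStar p g) {i j : ι} (hij : i ≠ j) :
    g j (g i p) = g i p :=
  hg.apply_eq_self hij (hg.apply_center_ne i) ((g i).injective.ne (hg.apply_center_ne i))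

theorem injective_apply_center [Nontrivial ι] (hg : IsStar p g) :
    Function.Injective fun i => g i p := fun i j hij => by
  by_contra hne
  have hfix : g j (g j p) = g j p := by simpa only [← hij] using hg.apply_apply_center hne
  exact hg.apply_center_ne j ((g j).injective hfix)

theorem commutator_eq [DecidableEq α] [Nontrivial ι] (hg : IsStar p g) {i j : ι} (hij : i ≠ j) :
    ⁅g i, g j⁆ = swap (g j p) (g i p) * swap (g j p) p := by
  set a := g i
  set b := g j
  have hab : a (b p) = b p := hg.apply_apply_center hij.symm
  -- Cutting `p` out of its cycle in `b` leaves a permutation disjoint from `a`.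
  obtain ⟨t, hb⟩ : ∃ t, b = swap (b p) p * t := ⟨swap (b p) p * b, by simp⟩
  have ht : t = swap (b p) p * b := by rw [eq_comm, ← swap_inv, inv_mul_eq_iff_eq_mul, ← hb]
  have hdisj : Disjoint a t := fun x => by
    refine or_iff_not_imp_left.2 fun hax => ?_
    obtain rfl | hxp := eq_or_ne x p
    · rw [ht, mul_apply, swap_apply_left]
    · rw [ht, mul_apply, hg.apply_eq_self hij hxp hax]
      exact swap_apply_of_ne_of_ne (fun h => hax (h ▸ hab)) hxp
  calc ⁅a, b⁆ = ⁅a, swap (b p) p * t⁆ := by rw [← hb]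
    _ = a * swap (b p) p * (t * a⁻¹) * t⁻¹ * (swap (b p) p)⁻¹ := by
      rw [commutatorElement_def]; group
    _ = a * swap (b p) p * (a⁻¹ * t) * t⁻¹ * (swap (b p) p)⁻¹ := by
      rw [hdisj.commute.symm.inv_right.eq]
    _ = a * swap (b p) p * a⁻¹ * swap (b p) p := by rw [swap_inv]; group
    _ = swap (b p) (a p) * swap (b p) p := by rw [← swap_apply_apply, hab]

theorem isThreeCycle_commutator [Fintype α] [DecidableEq α] [Nontrivial ι] (hg : IsStar p g)
    {i j : ι} (hij : i ≠ j) : IsThreeCycle ⁅g i, g j⁆ := by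
  rw [hg.commutator_eq hij]
  exact isThreeCycle_swap_mul_swap_same (hg.injective_apply_center.ne hij.symm)
    (hg.apply_center_ne j) (hg.apply_center_ne i)

theorem isPreprimitive_closure [Nontrivial ι] (hg : IsStar p g) (hF : ∀ f ∈ F, f p = p)
    [IsPretransitive (Subgroup.closure (Set.range g ∪ F)) α] :
    IsPreprimitive (Subgroup.closure (Set.range g ∪ F)) α := by
  set H := Subgroup.closure (Set.range g ∪ F) with hH
  have hgH (i : ι) : g i ∈ H := Subgroup.subset_closure (Or.inl ⟨i, rfl⟩)
  have hFH {f : Perm α} (hf : f ∈ F) : f ∈ H := Subgroup.subset_closure (Or.inr hf)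
  refine .of_isTrivialBlock_base p fun {B} hpB hB => or_iff_not_imp_left.2 fun hsub => ?_
  obtain ⟨y, hyB, hyp⟩ := (Set.not_subsingleton_iff.1 hsub).exists_ne p
  have hstab {h : Perm α} (hh : h ∈ H) {x : α} (hx : x ∈ B) (hhx : h x ∈ B) : h • B = B :=
    hB.smul_eq_of_mem (g := ⟨h, hh⟩) hx hhx
  have hgB (i : ι) : g i • B = B := by
    by_cases hy : g i y = y
    · exact hstab (hgH i) hyB (hy.symm ▸ hyB)
    · obtain ⟨j, hji⟩ := exists_ne i
      have hjy : g j y = y := hg.apply_eq_self hji.symm hyp hy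
      have hjp : g j p ∈ B := by
        rw [← hstab (hgH j) hyB (hjy.symm ▸ hyB)]
        exact Set.smul_mem_smul_set hpB
      exact hstab (hgH i) hjp ((hg.apply_apply_center hji).symm ▸ hjp)
  have hHB : H ≤ stabilizer (Perm α) B := by
    rw [hH, Subgroup.closure_le]
    rintro h (⟨i, rfl⟩ | hf)
    · exact hgB i
    · exact hstab (hFH hf) hpB ((hF h hf).symm ▸ hpB)
  refine Set.eq_univ_of_forall fun x => ?_
  obtain ⟨h, rfl⟩ := exists_smul_eq H p x
  rw [← mem_stabilizer_iff.1 (hHB h.2)]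
  exact Set.smul_mem_smul_set hpB

end IsStar

theorem eq_top_of_alternatingGroup_le_of_sign_eq_neg_one [Fintype α] [DecidableEq α]
    {H : Subgroup (Perm α)} (hH : alternatingGroup α ≤ H) {g : Perm α} (hg : g ∈ H)
    (hsign : sign g = -1) : H = ⊤ := by
  refine (Subgroup.eq_top_iff' H).2 fun x => ?_
  rcases Int.units_eq_one_or (sign x) with hx | hx
  · exact hH (mem_alternatingGroup.2 hx)
  · rw [← mul_inv_cancel_left g x]
    exact mul_mem hg (hH (mem_alternatingGroup.2 (by simp [hsign, hx])))

theorem IsStar.closure_eq_top [Fintype α] [DecidableEq α] [Nontrivial ι] (hg : IsStar p g)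
    (hF : ∀ f ∈ F, f p = p) [IsPretransitive (Subgroup.closure (Set.range g ∪ F)) α] {i : ι}
    (hi : sign (g i) = -1) : Subgroup.closure (Set.range g ∪ F) = ⊤ := by
  have hgH (i : ι) : g i ∈ Subgroup.closure (Set.range g ∪ F) :=
    Subgroup.subset_closure (Or.inl ⟨i, rfl⟩)
  obtain ⟨j, hj⟩ := exists_ne i
  have hcomm : ⁅g i, g j⁆ ∈ Subgroup.closure (Set.range g ∪ F) :=
    mul_mem (mul_mem (mul_mem (hgH i) (hgH j)) (inv_mem (hgH i))) (inv_mem (hgH j))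
  exact eq_top_of_alternatingGroup_le_of_sign_eq_neg_one
    (alternatingGroup_le_of_isPreprimitive_of_isThreeCycle_mem (hg.isPreprimitive_closure hF)
      (hg.isThreeCycle_commutator hj.symm) hcomm) (hgH i) hi

end Star

section SameCycle

theorem sameCycle_mul_of_disjoint {α : Type*} {g h : Perm α} (hgh : Disjoint g h) {x y : α}
    (hxy : g.SameCycle x y) : (g * h).SameCycle x y := by
  rcases hgh x with hx | hx
  · rw [hxy.eq_of_left hx]
  · obtain ⟨i, rfl⟩ := hxy
    exact ⟨i, by rw [hgh.commute.mul_zpow, mul_apply, zpow_apply_eq_self_of_apply_eq_self hx]⟩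

theorem mem_orbit_of_sameCycle {α : Type*} {p : α} {H : Subgroup (Perm α)} {g : Perm α}
    (hg : g ∈ H) {x y : α} (hxy : g.SameCycle x y) (hx : x ∈ orbit H p) : y ∈ orbit H p := by
  obtain ⟨i, rfl⟩ := hxy
  exact mem_orbit_of_mem_orbit (⟨g ^ i, zpow_mem hg i⟩ : H) hx

theorem isPretransitive_closure_of_sameCycle {α ι κ : Type*} {p : α} {g : ι → Perm α}
    {f : κ → Perm α} {K D : Set α} (hgK : K ⊆ Set.range fun i => g i p)
    (hfK : ∀ x ∉ D, x ≠ p → ∃ j, ∃ r ∈ K, (f j).SameCycle r x)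
    (hgD : ∀ x ∈ D, ∃ i, ∃ r ∉ D, (g i).SameCycle r x) :
    IsPretransitive (Subgroup.closure (Set.range g ∪ Set.range f)) α := by
  set H := Subgroup.closure (Set.range g ∪ Set.range f)
  have hgH (i : ι) : g i ∈ H := Subgroup.subset_closure (Or.inl ⟨i, rfl⟩)
  have hfH (j : κ) : f j ∈ H := Subgroup.subset_closure (Or.inr ⟨j, rfl⟩)
  have hK_orbit : ∀ x ∈ K, x ∈ orbit H p := fun x hx => by
    obtain ⟨i, rfl⟩ := hgK hx
    exact mem_orbit p (⟨g i, hgH i⟩ : H)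
  have hD_compl_orbit : ∀ x ∉ D, x ∈ orbit H p := fun x hx => by
    obtain rfl | hxp := eq_or_ne x p
    · exact mem_orbit_self x
    · obtain ⟨j, r, hr, hrx⟩ := hfK x hx hxp
      exact mem_orbit_of_sameCycle (hfH j) hrx (hK_orbit r hr)
  have hD_orbit : ∀ x ∈ D, x ∈ orbit H p := fun x hx => by
    obtain ⟨i, r, hr, hrx⟩ := hgD x hx
    exact mem_orbit_of_sameCycle (hgH i) hrx (hD_compl_orbit r hr)
  refine (isPretransitive_iff_orbit_eq_univ p).2 (Set.eq_univ_of_forall fun x => ?_)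
  by_cases hx : x ∈ D
  exacts [hD_orbit x hx, hD_compl_orbit x hx]

end SameCycle

section Construction

variable {α : Type*} [Fintype α] [DecidableEq α]

theorem exists_isCycle_support_eq {s : Finset α} (hs : 2 ≤ #s) :
    ∃ g : Perm α, g.IsCycle ∧ g.support = s := by
  obtain ⟨g, hg, hgs⟩ := s.exists_cycleOn
  have hs' : (s : Set α).Nontrivial := Finset.one_lt_card_iff_nontrivial.1 hs
  refine ⟨g, isCycle_iff_exists_isCycleOn.2 ⟨s, hs', hg, fun x hx => hgs (mem_support.2 hx)⟩,
    hgs.antisymm fun x hx => mem_support.2 (hg.apply_ne hs' hx)⟩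

theorem exists_cycleType_eq_of_support {A : Multiset ℕ} (hA : ∀ a ∈ A, 2 ≤ a) {K U : Finset α}
    (hKU : K ⊆ U) (hK : #K = A.card) (hU : #U = A.sum) :
    ∃ g : Perm α, g.cycleType = A ∧ g.support = U ∧ ∀ x ∈ U, ∃ r ∈ K, g.SameCycle r x := by
  induction A using Multiset.induction generalizing K U with
  | empty => exact ⟨1, by simp_all⟩
  | cons a A ih =>
    rw [Multiset.card_cons] at hK
    rw [Multiset.sum_cons] at hU
    obtain ⟨ha, hA⟩ := Multiset.forall_mem_cons.1 hA
    obtain ⟨r, L, hrL, rfl, hL⟩ := Finset.card_eq_succ.1 hK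
    obtain ⟨hrU, hLU⟩ := Finset.insert_subset_iff.1 hKU
    have hAcard : A.card ≤ A.sum := by
      simpa using Multiset.card_nsmul_le_sum fun b hb => one_le_two.trans (hA b hb)
    obtain ⟨B, hrB, hBU, hB⟩ := Finset.exists_subsuperset_card_eq (n := a)
      (Finset.singleton_subset_iff.2 (Finset.mem_sdiff.2 ⟨hrU, hrL⟩))
      (by rw [Finset.card_singleton]; omega)
      (by rw [Finset.card_sdiff_of_subset hLU]; omega)
    rw [Finset.singleton_subset_iff] at hrB
    obtain ⟨hBU, hBL⟩ := Finset.subset_sdiff.1 hBU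
    obtain ⟨g, hgA, hgU, hgL⟩ := ih hA (Finset.subset_sdiff.2 ⟨hLU, hBL.symm⟩) hL
      (by rw [Finset.card_sdiff_of_subset hBU]; omega)
    obtain ⟨b, hb, rfl⟩ := exists_isCycle_support_eq (hB ▸ ha)
    have hbg : Disjoint b g := disjoint_iff_disjoint_support.2 (hgU ▸ Finset.disjoint_sdiff)
    refine ⟨b * g, ?_, ?_, fun x hx => ?_⟩
    · rw [hbg.cycleType_mul, hb.cycleType, hgA, hB, Multiset.singleton_add]
    · rw [hbg.support_mul, hgU, Finset.union_sdiff_of_subset hBU]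
    · by_cases hxb : x ∈ b.support
      · exact ⟨r, Finset.mem_insert_self r L, sameCycle_mul_of_disjoint hbg
          (hb.sameCycle (mem_support.1 hrB) (mem_support.1 hxb))⟩
      · obtain ⟨s, hs, hsx⟩ := hgL x (Finset.mem_sdiff.2 ⟨hx, hxb⟩)
        rw [hbg.commute.eq]
        exact ⟨s, Finset.mem_insert_of_mem hs, sameCycle_mul_of_disjoint hbg.symm hsx⟩

variable {A : Multiset ℕ} {p : α} {c m : ℕ}

theorem exists_cycleType_eq_of_support_eq_insert (hA : ∀ a ∈ A, 2 ≤ a) (hA0 : A ≠ 0)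
    (hc : A.sum = c + A.card) {U : Finset α} (hpU : p ∉ U) (hU : #U = A.sum - 1) :
    ∃ g : Perm α, g.cycleType = A ∧ g.support = insert p U ∧
      ∃ D ⊆ U, #D = c ∧ ∀ x ∈ D, ∃ r ∈ insert p (U \ D), g.SameCycle r x := by
  have hApos : 0 < A.card := Multiset.card_pos.2 hA0
  obtain ⟨D, hDU, hD⟩ := Finset.exists_subset_card_eq (s := U) (n := c) (by omega)
  obtain ⟨g, hgA, hgU, hgr⟩ := exists_cycleType_eq_of_support hA
    (Finset.insert_subset_insert p (Finset.sdiff_subset (s := U) (t := D)))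
    (by
      rw [Finset.card_insert_of_notMem fun h => hpU (Finset.mem_sdiff.1 h).1,
        Finset.card_sdiff_of_subset hDU]
      omega)
    (by rw [Finset.card_insert_of_notMem hpU]; omega)
  exact ⟨g, hgA, hgU, D, hDU, hD, fun x hx => hgr x (Finset.mem_insert_of_mem (hDU hx))⟩

theorem exists_isStar_of_cycleType (hA : ∀ a ∈ A, 2 ≤ a) (hA0 : A ≠ 0) (hc : A.sum = c + A.card)
    (p : α) (hm : m * (A.sum - 1) < Fintype.card α) :
    ∃ g : Fin m → Perm α, IsStar p g ∧ (∀ i, (g i).cycleType = A) ∧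
      ∃ D : Finset α, p ∉ D ∧ #D = m * c ∧ ∀ x ∈ D, ∃ i, ∃ r ∉ D, (g i).SameCycle r x := by
  obtain ⟨U, hUp, hUcard, hUdisj⟩ := exists_pairwise_disjoint_subsets_card_eq
    (s := Finset.univ.erase p) (m := m) (d := A.sum - 1)
    (by rw [Finset.card_erase_of_mem (Finset.mem_univ p), Finset.card_univ]; omega)
  have hpU (i : Fin m) : p ∉ U i := fun h => Finset.notMem_erase p _ (hUp i h)
  choose g hgA hgU D hDU hD hDr using fun i =>
    exists_cycleType_eq_of_support_eq_insert hA hA0 hc (hpU i) (hUcard i)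
  have hpD : p ∉ Finset.univ.biUnion D := by
    simpa using fun i h => hpU i (hDU i h)
  refine ⟨g, fun i j hij x => ?_, hgA, Finset.univ.biUnion D, hpD, ?_, fun x hx => ?_⟩
  · rw [← mem_support, ← mem_support, hgU, hgU, ← Finset.mem_inter, ← Finset.insert_inter_distrib,
      Finset.disjoint_iff_inter_eq_empty.1 (hUdisj hij), insert_empty_eq, Finset.mem_singleton]
  · rw [Finset.card_biUnion fun i _ j _ hij => (hUdisj hij).mono (hDU i) (hDU j)]
    simp [hD]
  · obtain ⟨i, -, hxi⟩ := Finset.mem_biUnion.1 hx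
    obtain ⟨r, hr, hrx⟩ := hDr i x hxi
    refine ⟨i, r, ?_, hrx⟩
    rcases Finset.mem_insert.1 hr with rfl | hr
    · exact hpD
    · obtain ⟨hrU, hrD⟩ := Finset.mem_sdiff.1 hr
      intro hrD'
      obtain ⟨j, -, hrj⟩ := Finset.mem_biUnion.1 hrD'
      obtain rfl | hij := eq_or_ne i j
      · exact hrD hrj
      · exact Finset.disjoint_left.1 (hUdisj hij) hrU (hDU j hrj)

theorem exists_cycleType_eq_of_apply_eq_self (hA : ∀ a ∈ A, 2 ≤ a) (hc : A.sum = c + A.card)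
    (hcard : A.sum < Fintype.card α) {K P : Finset α} (hpK : p ∉ K) (hpP : p ∉ P)
    (hK : #K = A.card) (hP : #P ≤ c) :
    ∃ f : Perm α, f.cycleType = A ∧ f p = p ∧ ∀ x ∈ P, ∃ r ∈ K, f.SameCycle r x := by
  obtain ⟨U, hKP, hUp, hU⟩ := Finset.exists_subsuperset_card_eq (s := K ∪ P)
    (t := Finset.univ.erase p) (n := A.sum)
    (fun x hx => Finset.mem_erase.2 ⟨by rintro rfl; simp_all, Finset.mem_univ x⟩)
    ((Finset.card_union_le K P).trans (by omega))
    (by rw [Finset.card_erase_of_mem (Finset.mem_univ p), Finset.card_univ]; omega)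
  obtain ⟨hKU, hPU⟩ := Finset.union_subset_iff.1 hKP
  obtain ⟨f, hfA, hfU, hfK⟩ := exists_cycleType_eq_of_support hA hKU hK hU
  refine ⟨f, hfA, notMem_support.1 fun hp => ?_, fun x hx => hfK x (hPU hx)⟩
  exact Finset.notMem_erase p _ (hUp (hfU ▸ hp))

theorem exists_absorbing_family (hA : ∀ a ∈ A, 2 ≤ a) (hc : A.sum = c + A.card)
    (hcard : A.sum < Fintype.card α) {K R : Finset α} (hpK : p ∉ K) (hpR : p ∉ R)
    (hK : #K = A.card) {l : ℕ} (hR : #R ≤ l * c) :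
    ∃ f : Fin l → Perm α, (∀ j, (f j).cycleType = A) ∧ (∀ j, f j p = p) ∧
      ∀ x ∈ R, ∃ j, ∃ r ∈ K, (f j).SameCycle r x := by
  obtain ⟨P, hPR, hPcard, hRP⟩ := exists_cover_subsets_card_le hR
  choose f hfA hfp hfK using fun j =>
    exists_cycleType_eq_of_apply_eq_self hA hc hcard hpK (fun h => hpR (hPR j h)) hK (hPcard j)
  refine ⟨f, hfA, hfp, fun x hx => ?_⟩
  obtain ⟨j, hxj⟩ := hRP x hx
  exact ⟨j, hfK j x hxj⟩

theorem exists_isStar_isPretransitive_of_cycleType (hA : ∀ a ∈ A, 2 ≤ a) (hA0 : A ≠ 0)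
    (hc : A.sum = c + A.card) (hm : 2 ≤ m) (hAm : A.card ≤ m)
    (hlow : m * (A.sum - 1) < Fintype.card α) {l : ℕ} (hupp : Fintype.card α - 1 ≤ c * (m + l)) :
    ∃ (p : α) (g : Fin m → Perm α) (f : Fin l → Perm α), IsStar p g ∧ (∀ j, f j p = p) ∧
      (∀ i, (g i).cycleType = A) ∧ (∀ j, (f j).cycleType = A) ∧
      IsPretransitive (Subgroup.closure (Set.range g ∪ Set.range f)) α := by
  obtain ⟨p⟩ : Nonempty α := Fintype.card_pos_iff.1 (by omega)
  have : Nontrivial (Fin m) := Fin.nontrivial_iff_two_le.2 hm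
  obtain ⟨g, hg, hgA, D, hpD, hD, hgD⟩ := exists_isStar_of_cycleType hA hA0 hc p hlow
  obtain ⟨K, hKg, hK⟩ := Finset.exists_subset_card_eq (s := Finset.univ.image fun i => g i p)
    (n := A.card)
    (by rwa [Finset.card_image_of_injective _ hg.injective_apply_center, Finset.card_fin])
  replace hKg : (K : Set α) ⊆ Set.range fun i => g i p := by
    simpa using Finset.coe_subset.2 hKg
  have hpK : p ∉ K := fun hp => by
    obtain ⟨i, hi⟩ := hKg hp
    exact hg.apply_center_ne i hi
  have hR : #(insert p D)ᶜ ≤ l * c := by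
    rw [Finset.card_compl, Finset.card_insert_of_notMem hpD, hD]
    rw [mul_add, mul_comm c, mul_comm c] at hupp
    omega
  have hcard : A.sum < Fintype.card α := by
    obtain ⟨a, ha⟩ := Multiset.exists_mem_of_ne_zero hA0
    have : 2 ≤ A.sum := (hA a ha).trans (Multiset.le_sum_of_mem ha)
    have := Nat.mul_le_mul_right (A.sum - 1) hm
    omega
  obtain ⟨f, hfA, hfp, hfR⟩ := exists_absorbing_family hA hc hcard hpK (p := p) (by simp) hK hR
  exact ⟨p, g, f, hg, hfp, hgA, hfA, isPretransitive_closure_of_sameCycle (D := D) hKg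
    (fun x hxD hxp => hfR x (by simpa [hxp] using hxD)) hgD⟩

theorem exists_generators_of_cycleType (hA : ∀ a ∈ A, 2 ≤ a) (hA0 : A ≠ 0)
    (hc : A.sum = c + A.card) (hodd : Odd c) (hm : 2 ≤ m) (hAm : A.card ≤ m)
    (hlow : m * (A.sum - 1) < Fintype.card α) {N : ℕ} (hupp : Fintype.card α - 1 ≤ c * N) :
    ∃ T : Finset (Perm α), (∀ g ∈ T, g.cycleType = A) ∧
      Subgroup.closure (T : Set (Perm α)) = ⊤ ∧ #T ≤ N := by
  obtain ⟨l, rfl⟩ : ∃ l, N = m + l := by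
    have hcA : c ≤ A.sum - 1 := by
      have := Multiset.card_pos.2 hA0
      omega
    refine Nat.exists_eq_add_of_le (le_of_mul_le_mul_left ?_ hodd.pos)
    calc c * m ≤ (A.sum - 1) * m := Nat.mul_le_mul_right m hcA
      _ ≤ Fintype.card α - 1 := by rw [mul_comm]; exact Nat.le_sub_one_of_lt hlow
      _ ≤ c * N := hupp
  have : Nontrivial (Fin m) := Fin.nontrivial_iff_two_le.2 hm
  obtain ⟨p, g, f, hg, hfp, hgA, hfA, htrans⟩ :=
    exists_isStar_isPretransitive_of_cycleType hA hA0 hc hm hAm hlow hupp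
  obtain ⟨i⟩ : Nonempty (Fin m) := inferInstance
  have hsign : sign (g i) = -1 := by
    rw [sign_of_cycleType, hgA, hc, add_assoc]
    exact (hodd.add_even (Even.add_self _)).neg_one_pow
  refine ⟨Finset.univ.image g ∪ Finset.univ.image f, ?_, ?_, ?_⟩
  · simpa [or_imp, forall_and] using And.intro hgA hfA
  · simpa using hg.closure_eq_top (Set.forall_mem_range.2 hfp) hsign
  · calc _ ≤ _ := Finset.card_union_le _ _
      _ ≤ m + l := by
        gcongr <;> exact Finset.card_image_le.trans_eq (Finset.card_fin _)

end Construction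

theorem card_le_sum_sub_card {A : Multiset ℕ} (hA : ∀ a ∈ A, 2 ≤ a) :
    A.card ≤ A.sum - A.card :=
  Nat.le_sub_of_add_le <| by simpa [mul_two] using Multiset.card_nsmul_le_sum hA

theorem sum_eq_sum_sub_card_add_card {A : Multiset ℕ} (hA : ∀ a ∈ A, 1 ≤ a) :
    A.sum = A.sum - A.card + A.card :=
  (Nat.sub_add_cancel (by simpa using Multiset.card_nsmul_le_sum hA)).symm

theorem stmt_12_general {α : Type*} [Fintype α] [DecidableEq α] {A : Multiset ℕ}
    (hA : ∀ a ∈ A, 2 ≤ a) (hodd : Odd (A.sum - A.card))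
    (hα : max 2 A.card * (A.sum - 1) < Fintype.card α) :
    IsLeast {c : ℕ | ∃ T : Finset (Perm α), (∀ g ∈ T, g.cycleType = A) ∧
      Subgroup.closure (T : Set (Perm α)) = ⊤ ∧ #T = c}
      ((Fintype.card α - 1) ⌈/⌉ (A.sum - A.card)) := by
  have hA0 : A ≠ 0 := by
    rintro rfl
    simp at hodd
  constructor
  · obtain ⟨T, hTA, hT, hcard⟩ := exists_generators_of_cycleType hA hA0
      (sum_eq_sum_sub_card_add_card fun a ha => one_le_two.trans (hA a ha)) hodd
      (le_max_left _ _) (le_max_right _ _) hα (le_smul_ceilDiv hodd.pos)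
    exact ⟨T, hTA, hT, hcard.antisymm
      (card_sub_one_ceilDiv_le_card_of_closure_eq_top hodd.pos hTA hT)⟩
  · rintro _ ⟨T, hTA, hT, rfl⟩
    exact card_sub_one_ceilDiv_le_card_of_closure_eq_top hodd.pos hTA hT

theorem le_eval_cyclotomic {n q : ℕ} (hn : 1 < n) (hq : 1 < q) :
    (q : ℤ) ≤ (Polynomial.cyclotomic n ℤ).eval (q : ℤ) := by
  have hpos : 0 < (Polynomial.cyclotomic n ℤ).eval (q : ℤ) :=
    Polynomial.cyclotomic_pos' n (by exact_mod_cast hq)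
  have hlt : q - 1 < ((Polynomial.cyclotomic n ℤ).eval (q : ℤ)).natAbs :=
    (Nat.le_self_pow (Nat.totient_pos.2 (by omega)).ne' _).trans_lt
      (Polynomial.sub_one_pow_totient_lt_natAbs_cyclotomic_eval hn hq.ne')
  omega

theorem max_two_card_mul_le_mul_two_mul_card {A : Multiset ℕ} (hA0 : A ≠ 0)
    (hA : ∀ a ∈ A, 2 ≤ a) :
    max 2 A.card * (A.sum - 1) ≤ (A.sum - A.card) * (2 * A.card) := by
  have hsum := sum_eq_sum_sub_card_add_card fun a ha => one_le_two.trans (hA a ha)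
  have hkc := card_le_sum_sub_card hA
  obtain ⟨k, hk⟩ := Nat.exists_eq_add_one.2 (Multiset.card_pos.2 hA0)
  generalize A.sum - A.card = c at hsum hkc ⊢
  rw [hsum, hk, ← add_assoc, Nat.add_sub_cancel, max_mul, max_le_iff]
  constructor <;> nlinarith

theorem max_two_card_mul_lt_of_cyclotomic_bound {A : Multiset ℕ} (hA0 : A ≠ 0)
    (hA : ∀ a ∈ A, 2 ≤ a) {n : ℕ}
    (hn : ((A.sum - A.card : ℕ) : ℤ) *
      (Polynomial.cyclotomic (2 * A.card) ℤ).eval ((2 * A.card : ℕ) : ℤ) + 1 ≤ n) :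
    max 2 A.card * (A.sum - 1) < n := by
  have hcard : 1 < 2 * A.card := by
    have := Multiset.card_pos.2 hA0
    omega
  refine Int.ofNat_lt.1 ?_
  calc ((max 2 A.card * (A.sum - 1) : ℕ) : ℤ)
      ≤ ((A.sum - A.card : ℕ) : ℤ) * ((2 * A.card : ℕ) : ℤ) := by
        exact_mod_cast max_two_card_mul_le_mul_two_mul_card hA0 hA
    _ ≤ ((A.sum - A.card : ℕ) : ℤ) *
        (Polynomial.cyclotomic (2 * A.card) ℤ).eval ((2 * A.card : ℕ) : ℤ) := by
        gcongr
        exact le_eval_cyclotomic hcard hcard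
    _ < n := hn

/-- Let `A` be a nonempty multiset of `k` integers each `≥ 2` with
`c(A) = Σ (a_i − 1) = A.sum - A.card` odd. For all
`n ≥ c(A)·Φ_{2k}(2k) + 1` (with `Φ` the cyclotomic polynomial over ℤ), the
minimum cardinality of a subset of the extended conjugacy class `C(A)` in `S_n`
generating `S_n` is exactly `⌈(n−1)/c(A)⌉`. -/
theorem stmt_12 (A : Multiset ℕ) (hA : A ≠ 0) (hA2 : ∀ a ∈ A, 2 ≤ a)
    (hodd : Odd (A.sum - Multiset.card A)) (n : ℕ)
    (hn : ((A.sum - Multiset.card A : ℕ) : ℤ) *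
        (Polynomial.cyclotomic (2 * Multiset.card A) ℤ).eval ((2 * Multiset.card A : ℕ) : ℤ)
        + 1 ≤ (n : ℤ)) :
    IsLeast {c : ℕ | ∃ T : Finset (Equiv.Perm (Fin n)),
        (∀ g ∈ T, g.cycleType = A) ∧
        Subgroup.closure (T : Set (Equiv.Perm (Fin n))) = ⊤ ∧
        T.card = c} ((n - 1) ⌈/⌉ (A.sum - Multiset.card A)) := by
  simpa using stmt_12_general (α := Fin n) hA2 hodd
    (by simpa using max_two_card_mul_lt_of_cyclotomic_bound hA hA2 hn)
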